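/- arXiv:1310.2648 — 2 statements merged into one kernel-verified Lean document; each statement's English description precedes it below -/
import Mathlib

section
/- Every conditional probability mass function P that is a NE for the stochastic game is also a CE for the stochastic game. -/
open Finset

/-!
Under a product-form `P`, player `i`'s action is independent of the opponents' actions once the
event `ω` is fixed, and its conditional law depends on `ω` only through `ωᵢ`. The payoff of a fixed
deviation `β` does not involve player `i`'s own action, so restricting the CCE constraint of
`(i, v, β)` to the recommendation `c` multiplies both of its sides by `Pᵢ(c | v) ≥ 0`. Hence the CCE
thresholds `θᵢ(v)`, used for every recommendation `c`, are CE thresholds.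
-/

section ProductWeights

variable {ι R : Type*} [DecidableEq ι] {A : ι → Type*} {i : ι}

lemma dependsOn_comp_update {β : Type*} (f : (∀ j, A j) → β) (i : ι) (a : A i) :
    DependsOn (fun α => f (Function.update α i a)) {i}ᶜ := by
  intro α α' h
  refine congrArg f (funext fun j => ?_)
  obtain rfl | hj := eq_or_ne j i
  · simp only [Function.update_self]
  · simpa only [Function.update_of_ne hj] using h j hj

lemma dependsOn_prod_erase [Fintype ι] [CommMonoid R] (p : ∀ j, A j → R) (i : ι) :
    DependsOn (fun α : ∀ j, A j => ∏ j ∈ univ.erase i, p j (α j)) {i}ᶜ :=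
  fun _ _ h => prod_congr rfl fun j hj => congrArg (p j) (h j (ne_of_mem_erase hj))

lemma apply_update_of_dependsOn_compl {β : Type*} {f : (∀ j, A j) → β}
    (hf : DependsOn f {i}ᶜ) (α : ∀ j, A j) (a : A i) : f (Function.update α i a) = f α :=
  hf fun _ hj => Function.update_of_ne hj _ _

variable [Fintype ι] [∀ j, Fintype (A j)] [DecidableEq (A i)]

lemma sum_filter_apply_eq_of_dependsOn_compl [AddCommMonoid R] {f : (∀ j, A j) → R}
    (hf : DependsOn f {i}ᶜ) (a b : A i) : ∑ α with α i = a, f α = ∑ α with α i = b, f α := by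
  refine sum_nbij' (fun α => Function.update α i b) (fun α => Function.update α i a)
    (by simp) (by simp) ?_ ?_ fun α _ => (apply_update_of_dependsOn_compl hf α b).symm
  all_goals
    intro α hα
    simp [← (mem_filter.mp hα).2]

lemma sum_filter_apply_mul_of_dependsOn_compl [NonAssocSemiring R] {p : A i → R} (hp : ∑ a, p a = 1)
    {f : (∀ j, A j) → R} (hf : DependsOn f {i}ᶜ) (c : A i) :
    ∑ α with α i = c, p (α i) * f α = p c * ∑ α, p (α i) * f α := by
  have fiber (a : A i) :
      ∑ α with α i = a, p (α i) * f α = p a * ∑ α with α i = c, f α := by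
    rw [← sum_filter_apply_eq_of_dependsOn_compl hf a c, mul_sum]
    exact sum_congr rfl fun α hα => by rw [(mem_filter.mp hα).2]
  have total : ∑ α : ∀ j, A j, p (α i) * f α = ∑ α with α i = c, f α := by
    rw [← sum_fiberwise univ (fun α : ∀ j, A j => α i)]
    simp only [fiber, ← sum_mul, hp, one_mul]
  rw [fiber, total]

lemma sum_filter_prod_mul_of_dependsOn_compl [CommSemiring R] {p : ∀ j, A j → R}
    (hp : ∑ a, p i a = 1) {f : (∀ j, A j) → R} (hf : DependsOn f {i}ᶜ) (c : A i) :
    ∑ α with α i = c, (∏ j, p j (α j)) * f α = p i c * ∑ α, (∏ j, p j (α j)) * f α := by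
  have others : DependsOn (fun α => (∏ j ∈ univ.erase i, p j (α j)) * f α) {i}ᶜ :=
    fun _ _ h => congrArg₂ (· * ·) (dependsOn_prod_erase p i h) (hf h)
  have split (α : ∀ j, A j) :
      (∏ j, p j (α j)) * f α = p i (α i) * ((∏ j ∈ univ.erase i, p j (α j)) * f α) := by
    rw [← mul_prod_erase univ (fun j => p j (α j)) (mem_univ i), mul_assoc]
  simp only [split]
  exact sum_filter_apply_mul_of_dependsOn_compl hp others c

end ProductWeights

/-- A stochastic game with players `ι`, events `Ω`, and signal and action sets `S i` and `A i` of
player `i`. Events are abstract rather than tuples: `signal i ω` is the component `ωᵢ` observed by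
player `i`. The event weights and the utilities are arbitrary reals; `maxUtility i` is the upper end
of the interval in which the equilibrium thresholds of player `i` are sought. -/
structure StochasticGame (ι Ω : Type*) (S A : ι → Type*) where
  weight : Ω → ℝ
  signal : ∀ i, Ω → S i
  utility : ι → (∀ j, A j) → Ω → ℝ
  maxUtility : ι → ℝ

namespace StochasticGame

variable {ι Ω : Type*} {S A : ι → Type*} (G : StochasticGame ι Ω S A)
  (P : Ω → (∀ j, A j) → ℝ)

/-- The unnormalized conditional expectation `𝔼[f; ω ∈ E, α ∈ B]` when `ω` has law `G.weight` and,
given `ω`, the action profile `α` has law `P ω`. -/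
def partialExpectation (E : Finset Ω) (B : Finset (∀ j, A j)) (f : (∀ j, A j) → Ω → ℝ) : ℝ :=
  ∑ ω ∈ E, ∑ α ∈ B, G.weight ω * P ω α * f α ω

lemma partialExpectation_sub (E : Finset Ω) (B : Finset (∀ j, A j)) (f g : (∀ j, A j) → Ω → ℝ) :
    G.partialExpectation P E B (fun α ω => f α ω - g α ω) =
      G.partialExpectation P E B f - G.partialExpectation P E B g := by
  simp only [partialExpectation, mul_sub, sum_sub_distrib]

/-- The joint law `P` is generated by the strategies `σ`: given the event, players randomize
independently, player `i` drawing an action from `σ i v` on observing the signal `v`. -/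
def IsGeneratedBy [Fintype ι] [∀ i, Fintype (A i)] (σ : ∀ i, S i → A i → ℝ) : Prop :=
  (∀ i v a, 0 ≤ σ i v a) ∧ (∀ i v, ∑ a, σ i v a = 1) ∧
    ∀ ω α, P ω α = ∏ i, σ i (G.signal i ω) (α i)

variable [Fintype ι] [DecidableEq ι] [Fintype Ω] [∀ i, DecidableEq (S i)] [∀ i, Fintype (A i)]

/-- Coarse correlated equilibrium: a player who has seen only the signal `v` cannot gain over the
threshold `θ i v` by committing to a fixed action `β`. -/
def IsCCE : Prop :=
  ∃ θ : ∀ i, S i → ℝ,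
    (∀ i v, θ i v ∈ Set.Icc 0 (G.maxUtility i)) ∧
    (∀ i, G.partialExpectation P univ univ (G.utility i) ≥
      G.partialExpectation P univ univ fun _ ω => θ i (G.signal i ω)) ∧
    ∀ i v β, G.partialExpectation P {ω | G.signal i ω = v} univ (fun _ _ => θ i v) ≥
      G.partialExpectation P {ω | G.signal i ω = v} univ
        fun α ω => G.utility i (Function.update α i β) ω

/-- Nash equilibrium: a coarse correlated equilibrium in product form. -/
def IsNE : Prop :=
  (∃ σ, G.IsGeneratedBy P σ) ∧ G.IsCCE P

variable [∀ i, DecidableEq (A i)]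

/-- Correlated equilibrium: a player who has seen the signal `v` and the recommended action `c`
cannot gain over the threshold `θ i v c` by playing a fixed action `β` instead. -/
def IsCE : Prop :=
  ∃ θ : ∀ i, S i → A i → ℝ,
    (∀ i v c, θ i v c ∈ Set.Icc 0 (G.maxUtility i)) ∧
    (∀ i, G.partialExpectation P univ univ
      (fun α ω => G.utility i α ω - θ i (G.signal i ω) (α i)) ≥ 0) ∧
    ∀ i v c β,
      G.partialExpectation P {ω | G.signal i ω = v} {α | α i = c} (fun _ _ => θ i v c) ≥
      G.partialExpectation P {ω | G.signal i ω = v} {α | α i = c}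
        fun α ω => G.utility i (Function.update α i β) ω

variable {G P}

lemma IsGeneratedBy.partialExpectation_filter {σ : ∀ i, S i → A i → ℝ}
    (hσ : G.IsGeneratedBy P σ) {i : ι} {f : (∀ j, A j) → Ω → ℝ}
    (hf : ∀ ω, DependsOn (fun α => f α ω) {i}ᶜ) (v : S i) (c : A i) :
    G.partialExpectation P {ω | G.signal i ω = v} {α | α i = c} f =
      σ i v c * G.partialExpectation P {ω | G.signal i ω = v} univ f := by
  obtain ⟨-, hsum, hprod⟩ := hσ
  unfold partialExpectation
  rw [mul_sum]
  refine sum_congr rfl fun ω hω => ?_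
  have hv : G.signal i ω = v := (mem_filter.mp hω).2
  have factor := sum_filter_prod_mul_of_dependsOn_compl
    (p := fun j => σ j (G.signal j ω)) (hsum i _) (hf ω) c
  simp only [hprod, mul_assoc, ← mul_sum]
  rw [factor, hv, mul_left_comm]

end StochasticGame

open StochasticGame in
theorem statement8_general {ι Ω : Type*} {S A : ι → Type*} [Fintype ι] [DecidableEq ι]
    [Fintype Ω] [∀ i, DecidableEq (S i)] [∀ i, Fintype (A i)] [∀ i, DecidableEq (A i)]
    (G : StochasticGame ι Ω S A) {P : Ω → (∀ j, A j) → ℝ} (hP : G.IsNE P) : G.IsCE P := by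
  obtain ⟨⟨σ, hσ⟩, θ, hθ, hpayoff, hdev⟩ := hP
  refine ⟨fun i v _ => θ i v, fun i v _ => hθ i v, fun i => ?_, fun i v c β => ?_⟩
  · rw [partialExpectation_sub]
    exact sub_nonneg.mpr (hpayoff i)
  · rw [hσ.partialExpectation_filter fun _ _ _ _ => rfl,
      hσ.partialExpectation_filter fun ω => dependsOn_comp_update (G.utility i · ω) i β]
    exact mul_le_mul_of_nonneg_left (hdev i v β) (hσ.1 i v c)

/-- Every conditional pmf `P` that is a NE for the stochastic game (CCE
constraints plus product form) is also a CE for the stochastic game. -/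
theorem statement8
    (N : ℕ) (hN : 1 ≤ N)
    (Ω0 : Type) (Ωp : Fin N → Type) (A : Fin N → Type)
    [Fintype Ω0] [Nonempty Ω0]
    [∀ i, Fintype (Ωp i)] [∀ i, Nonempty (Ωp i)] [∀ i, DecidableEq (Ωp i)]
    [∀ i, Fintype (A i)] [∀ i, Nonempty (A i)] [∀ i, DecidableEq (A i)]
    (π : Ω0 × (∀ j, Ωp j) → ℝ)
    (hπ0 : ∀ ω, 0 ≤ π ω) (hπ1 : ∑ ω : Ω0 × (∀ j, Ωp j), π ω = 1)
    (U : ∀ _ : Fin N, (∀ j, A j) → Ω0 × (∀ j, Ωp j) → ℝ)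
    (umax : Fin N → ℝ) (humax : ∀ i, 0 ≤ umax i)
    (hU : ∀ i α ω, U i α ω ∈ Set.Icc 0 (umax i))
    (P : Ω0 × (∀ j, Ωp j) → (∀ j, A j) → ℝ)
    (hP0 : ∀ ω α, 0 ≤ P ω α)
    (hP1 : ∀ ω, ∑ α : ∀ j, A j, P ω α = 1)
    -- `P` has product form
    (hprod : ∃ Pc : ∀ i : Fin N, Ωp i → A i → ℝ,
      (∀ i v a, 0 ≤ Pc i v a) ∧ (∀ i v, ∑ a : A i, Pc i v a = 1) ∧
      (∀ (ω : Ω0 × (∀ j, Ωp j)) (α : ∀ j, A j), P ω α = ∏ i, Pc i (ω.2 i) (α i)))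
    -- `P` satisfies the stochastic CCE constraints
    (hCCE : ∃ θ : ∀ i : Fin N, Ωp i → ℝ,
      (∀ i v, θ i v ∈ Set.Icc 0 (umax i)) ∧
      (∀ i : Fin N,
        ∑ ω : Ω0 × (∀ j, Ωp j), ∑ α : ∀ j, A j, π ω * P ω α * U i α ω ≥
        ∑ ω : Ω0 × (∀ j, Ωp j), ∑ α : ∀ j, A j, π ω * P ω α * θ i (ω.2 i)) ∧
      (∀ (i : Fin N) (v : Ωp i) (β : A i),
        ∑ ω ∈ Finset.univ.filter (fun ω : Ω0 × (∀ j, Ωp j) => ω.2 i = v),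
          ∑ α : ∀ j, A j, π ω * P ω α * θ i v ≥
        ∑ ω ∈ Finset.univ.filter (fun ω : Ω0 × (∀ j, Ωp j) => ω.2 i = v),
          ∑ α : ∀ j, A j, π ω * P ω α * U i (Function.update α i β) ω)) :
    -- `P` is a CE for the stochastic game
    ∃ θ : ∀ i : Fin N, Ωp i → A i → ℝ,
      (∀ i v c, θ i v c ∈ Set.Icc 0 (umax i)) ∧
      (∀ i : Fin N,
        ∑ ω : Ω0 × (∀ j, Ωp j), ∑ α : ∀ j, A j,
          π ω * P ω α * (U i α ω - θ i (ω.2 i) (α i)) ≥ 0) ∧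
      (∀ (i : Fin N) (v : Ωp i) (c : A i) (β : A i),
        ∑ ω ∈ Finset.univ.filter (fun ω : Ω0 × (∀ j, Ωp j) => ω.2 i = v),
          ∑ α ∈ Finset.univ.filter (fun α : ∀ j, A j => α i = c),
            π ω * P ω α * θ i v c ≥
        ∑ ω ∈ Finset.univ.filter (fun ω : Ω0 × (∀ j, Ωp j) => ω.2 i = v),
          ∑ α ∈ Finset.univ.filter (fun α : ∀ j, A j => α i = c),
            π ω * P ω α * U i (Function.update α i β) ω) :=
  statement8_general ⟨π, fun i ω => ω.2 i, U, umax⟩ ⟨hprod, hCCE⟩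
end

section
/- Identify each conditional probability mass function P with the point (P(α|ω))_{(ω,α)} of the finite-dimensional real vector space ℝ^{Ω×𝒜}. Then the set of all conditional pmfs P that are CCE for the stochastic game is a closed, bounded, convex subset of ℝ^{Ω×𝒜}. -/
/-!
For a conditional pmf `P`, summing over the action profiles gives
`∑ α, π ω * P(α|ω) * θ i v = π ω * θ i v`. Hence both sides of the CCE inequalities, although
bilinear in `(P, θ)` as written, are linear in `(P, θ)` on conditional pmfs. The set of CCE is
therefore the projection to the `P`-coordinate of the compact convex set of pairs `(P, θ)`
satisfying these linear inequalities.
-/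

open Finset

section ConditionalPMF

variable (Ω 𝒜 : Type*) [Fintype 𝒜]

/-- The conditional probability mass functions on `𝒜` given `Ω`, as points `p` of `ℝ^{Ω × 𝒜}`:
`p (ω, α)` stands for `P(α|ω)`. -/
def conditionalPMFs : Set (Ω × 𝒜 → ℝ) :=
  {p | (∀ x, 0 ≤ p x) ∧ ∀ ω, ∑ α, p (ω, α) = 1}

variable {Ω 𝒜} in
lemma sum_mul_conditionalPMF_mul {p : Ω × 𝒜 → ℝ} (hp : p ∈ conditionalPMFs Ω 𝒜)
    (ω : Ω) (a c : ℝ) : ∑ α, a * p (ω, α) * c = a * c := by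
  rw [← sum_mul, ← mul_sum, hp.2, mul_one]

lemma conditionalPMFs_eq_preimage_pi_stdSimplex :
    conditionalPMFs Ω 𝒜 =
      LinearEquiv.curry ℝ ℝ Ω 𝒜 ⁻¹' Set.univ.pi fun _ => stdSimplex ℝ 𝒜 := by
  ext p
  simp [conditionalPMFs, stdSimplex, forall_and]

lemma convex_conditionalPMFs : Convex ℝ (conditionalPMFs Ω 𝒜) := by
  rw [conditionalPMFs_eq_preimage_pi_stdSimplex]
  exact (convex_pi fun _ _ => convex_stdSimplex ℝ 𝒜).linear_preimage
    (LinearEquiv.curry ℝ ℝ Ω 𝒜).toLinearMap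

lemma isCompact_conditionalPMFs : IsCompact (conditionalPMFs Ω 𝒜) := by
  rw [conditionalPMFs_eq_preimage_pi_stdSimplex, ← LinearEquiv.image_symm_eq_preimage]
  have continuous_uncurry : Continuous (LinearEquiv.curry ℝ ℝ Ω 𝒜).symm :=
    continuous_pi fun x => continuous_apply_apply x.1 x.2
  exact (isCompact_univ_pi fun _ => isCompact_stdSimplex ℝ 𝒜).image continuous_uncurry

end ConditionalPMF

section Thresholds

variable {ι : Type*} (T : ι → Type*) (umax : ι → ℝ)

/-- The box of thresholds `θ` with `θ i v ∈ [0, umax i]`. -/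
def thresholdBox : Set (∀ i, T i → ℝ) :=
  {θ | ∀ i v, θ i v ∈ Set.Icc 0 (umax i)}

lemma thresholdBox_eq_Icc : thresholdBox T umax = Set.Icc 0 fun i _ => umax i := by
  ext θ
  simp [thresholdBox, Pi.le_def, forall_and]

lemma convex_thresholdBox : Convex ℝ (thresholdBox T umax) :=
  thresholdBox_eq_Icc T umax ▸ convex_Icc _ _

lemma isCompact_thresholdBox : IsCompact (thresholdBox T umax) :=
  thresholdBox_eq_Icc T umax ▸ isCompact_Icc

end Thresholds

section Payoff

variable {Ω 𝒜 : Type*} [Fintype 𝒜]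

/-- The expected payoff `∑ ω ∈ s, ∑ α, π ω * P(α|ω) * f α ω` collected on the event `s`, as a
continuous linear functional of `P`. -/
def expectedPayoff (π : Ω → ℝ) (s : Finset Ω) (f : 𝒜 → Ω → ℝ) : (Ω × 𝒜 → ℝ) →L[ℝ] ℝ :=
  ∑ ω ∈ s, ∑ α, (π ω * f α ω) • ContinuousLinearMap.proj (ω, α)

lemma expectedPayoff_apply (π : Ω → ℝ) (s : Finset Ω) (f : 𝒜 → Ω → ℝ) (p : Ω × 𝒜 → ℝ) :
    expectedPayoff π s f p = ∑ ω ∈ s, ∑ α, π ω * p (ω, α) * f α ω := by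
  simp [expectedPayoff, mul_right_comm]

end Payoff

section CCE

variable {ι Ω : Type*} {T A : ι → Type*}

/-- The payoff `∑ ω ∈ s, π ω * θ i (τ i ω)` collected by player `i` on the event `s` when paid
the threshold `θ i v` at every signal `v`, as a continuous linear functional of `θ`. -/
def thresholdPayoff (π : Ω → ℝ) (τ : ∀ i, Ω → T i) (i : ι) (s : Finset Ω) :
    (∀ i, T i → ℝ) →L[ℝ] ℝ :=
  ∑ ω ∈ s, π ω • (ContinuousLinearMap.proj (R := ℝ) (φ := fun _ => ℝ) (τ i ω)).comp
    (ContinuousLinearMap.proj (φ := fun i => T i → ℝ) i)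

lemma thresholdPayoff_apply (π : Ω → ℝ) (τ : ∀ i, Ω → T i) (i : ι) (s : Finset Ω)
    (θ : ∀ i, T i → ℝ) : thresholdPayoff π τ i s θ = ∑ ω ∈ s, π ω * θ i (τ i ω) := by
  simp [thresholdPayoff]

variable [Fintype Ω] [DecidableEq ι] [∀ i, DecidableEq (T i)] [Fintype (∀ i, A i)]
  (π : Ω → ℝ) (τ : ∀ i, Ω → T i) (U : ι → (∀ i, A i) → Ω → ℝ) (umax : ι → ℝ)

/-- `p` is a coarse correlated equilibrium of the game in which the state is `ω` with weight
`π ω`, player `i` observes the signal `τ i ω`, and `U i α ω` is the utility of player `i` under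
the action profile `α`. The game in which player `i` observes the component `ω_i` of the
state is the case `τ i ω = ω_i`. -/
def IsCCE (p : Ω × (∀ i, A i) → ℝ) : Prop :=
  ∃ θ ∈ thresholdBox T umax,
    (∀ i, ∑ ω, ∑ α, π ω * p (ω, α) * U i α ω ≥ ∑ ω, ∑ α, π ω * p (ω, α) * θ i (τ i ω)) ∧
    ∀ (i : ι) (v : T i) (β : A i),
      ∑ ω with τ i ω = v, ∑ α, π ω * p (ω, α) * θ i v ≥
        ∑ ω with τ i ω = v, ∑ α, π ω * p (ω, α) * U i (Function.update α i β) ω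

/-- The pairs `(p, θ)` satisfying the incentive inequalities of a CCE, written in the linear form
which they take when `p` is a conditional probability mass function. -/
def incentiveCone : Set ((Ω × (∀ i, A i) → ℝ) × (∀ i, T i → ℝ)) :=
  {q | (∀ i, thresholdPayoff π τ i univ q.2 ≤ expectedPayoff π univ (U i) q.1) ∧
    ∀ (i : ι) (v : T i) (β : A i),
      expectedPayoff π {ω | τ i ω = v} (fun α => U i (Function.update α i β)) q.1 ≤
        thresholdPayoff π τ i {ω | τ i ω = v} q.2}

lemma convex_incentiveCone : Convex ℝ (incentiveCone π τ U) := by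
  intro q hq r hr a b ha hb _
  refine ⟨fun i => ?_, fun i v β => ?_⟩ <;>
    simp only [Prod.fst_add, Prod.snd_add, Prod.smul_fst, Prod.smul_snd, map_add, map_smul]
  · exact add_le_add (smul_le_smul_of_nonneg_left (hq.1 i) ha)
      (smul_le_smul_of_nonneg_left (hr.1 i) hb)
  · exact add_le_add (smul_le_smul_of_nonneg_left (hq.2 i v β) ha)
      (smul_le_smul_of_nonneg_left (hr.2 i v β) hb)

lemma isClosed_incentiveCone : IsClosed (incentiveCone π τ U) := by
  simp only [incentiveCone, Set.ofPred_and, Set.ofPred_forall]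
  refine (isClosed_iInter fun i => isClosed_le ?_ ?_).inter <|
    isClosed_iInter fun i => isClosed_iInter fun v => isClosed_iInter fun β => isClosed_le ?_ ?_
  all_goals fun_prop

lemma isCCE_iff_exists_mem_incentiveCone {p : Ω × (∀ i, A i) → ℝ}
    (hp : p ∈ conditionalPMFs Ω (∀ i, A i)) :
    IsCCE π τ U umax p ↔ ∃ θ ∈ thresholdBox T umax, (p, θ) ∈ incentiveCone π τ U := by
  have threshold_on_signal (θ : ∀ i, T i → ℝ) (i : ι) (v : T i) :
      ∑ ω with τ i ω = v, π ω * θ i (τ i ω) = ∑ ω with τ i ω = v, π ω * θ i v :=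
    sum_congr rfl fun ω hω => by rw [(mem_filter_univ ω).1 hω]
  simp only [IsCCE, incentiveCone, Set.mem_ofPred_eq, expectedPayoff_apply,
    thresholdPayoff_apply, sum_mul_conditionalPMF_mul hp, threshold_on_signal, ge_iff_le]

lemma setOf_isCCE_eq_image_fst :
    {p | p ∈ conditionalPMFs Ω (∀ i, A i) ∧ IsCCE π τ U umax p} = Prod.fst ''
      (conditionalPMFs Ω (∀ i, A i) ×ˢ thresholdBox T umax ∩ incentiveCone π τ U) := by
  ext p
  constructor
  · rintro ⟨hp, hcce⟩
    obtain ⟨θ, hθ, hincentive⟩ := (isCCE_iff_exists_mem_incentiveCone π τ U umax hp).1 hcce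
    exact ⟨(p, θ), ⟨⟨hp, hθ⟩, hincentive⟩, rfl⟩
  · rintro ⟨⟨p, θ⟩, ⟨⟨hp, hθ⟩, hincentive⟩, rfl⟩
    exact ⟨hp, (isCCE_iff_exists_mem_incentiveCone π τ U umax hp).2 ⟨θ, hθ, hincentive⟩⟩

theorem statement9_general :
    IsCompact {p | p ∈ conditionalPMFs Ω (∀ i, A i) ∧ IsCCE π τ U umax p} ∧
      Convex ℝ {p | p ∈ conditionalPMFs Ω (∀ i, A i) ∧ IsCCE π τ U umax p} := by
  rw [setOf_isCCE_eq_image_fst]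
  constructor
  · have compact_box :=
      (isCompact_conditionalPMFs Ω (∀ i, A i)).prod (isCompact_thresholdBox T umax)
    exact (compact_box.inter_right (isClosed_incentiveCone π τ U)).image continuous_fst
  · have convex_box := (convex_conditionalPMFs Ω (∀ i, A i)).prod (convex_thresholdBox T umax)
    exact (convex_box.inter (convex_incentiveCone π τ U)).linear_image (LinearMap.fst ℝ _ _)

end CCE

/-- Identifying conditional pmfs `P` with points of `ℝ^{Ω×𝒜}`, the set of
all conditional pmfs that are CCE for the stochastic game is closed, bounded and
convex. -/
theorem statement9
    (N : ℕ) (hN : 1 ≤ N)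
    (Ω0 : Type) (Ωp : Fin N → Type) (A : Fin N → Type)
    [Fintype Ω0] [Nonempty Ω0]
    [∀ i, Fintype (Ωp i)] [∀ i, Nonempty (Ωp i)] [∀ i, DecidableEq (Ωp i)]
    [∀ i, Fintype (A i)] [∀ i, Nonempty (A i)] [∀ i, DecidableEq (A i)]
    (π : Ω0 × (∀ j, Ωp j) → ℝ)
    (hπ0 : ∀ ω, 0 ≤ π ω) (hπ1 : ∑ ω : Ω0 × (∀ j, Ωp j), π ω = 1)
    (U : ∀ _ : Fin N, (∀ j, A j) → Ω0 × (∀ j, Ωp j) → ℝ)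
    (umax : Fin N → ℝ) (humax : ∀ i, 0 ≤ umax i)
    (hU : ∀ i α ω, U i α ω ∈ Set.Icc 0 (umax i))
    (S : Set ((Ω0 × (∀ j, Ωp j)) × (∀ j, A j) → ℝ))
    (hS : S = {p | (∀ x, 0 ≤ p x) ∧
      (∀ ω : Ω0 × (∀ j, Ωp j), ∑ α : ∀ j, A j, p (ω, α) = 1) ∧
      -- `p` (viewed as a conditional pmf) is a CCE for the stochastic game
      (∃ θ : ∀ i : Fin N, Ωp i → ℝ,
        (∀ i v, θ i v ∈ Set.Icc 0 (umax i)) ∧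
        (∀ i : Fin N,
          ∑ ω : Ω0 × (∀ j, Ωp j), ∑ α : ∀ j, A j, π ω * p (ω, α) * U i α ω ≥
          ∑ ω : Ω0 × (∀ j, Ωp j), ∑ α : ∀ j, A j, π ω * p (ω, α) * θ i (ω.2 i)) ∧
        (∀ (i : Fin N) (v : Ωp i) (β : A i),
          ∑ ω ∈ Finset.univ.filter (fun ω : Ω0 × (∀ j, Ωp j) => ω.2 i = v),
            ∑ α : ∀ j, A j, π ω * p (ω, α) * θ i v ≥
          ∑ ω ∈ Finset.univ.filter (fun ω : Ω0 × (∀ j, Ωp j) => ω.2 i = v),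
            ∑ α : ∀ j, A j, π ω * p (ω, α) * U i (Function.update α i β) ω))}) :
    IsClosed S ∧ Bornology.IsBounded S ∧ Convex ℝ S := by
  obtain rfl : S = {p | p ∈ conditionalPMFs _ (∀ i, A i) ∧ IsCCE π (fun i ω => ω.2 i) U umax p} :=
    hS.trans (Set.ext fun _ => and_assoc.symm)
  obtain ⟨hcompact, hconvex⟩ := statement9_general π (fun i ω => ω.2 i) U umax
  exact ⟨hcompact.isClosed, hcompact.isBounded, hconvex⟩
end
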